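/- Let $X$ be a Hausdorff topological space and let $p_0, p_1, p^*$ be three distinct points of $X$. Let $f \colon [0,1] \to X$ be a loop based at $p_1$ (i.e. $f(0) = f(1) = p_1$) such that $p_0$ is not in the image of $f$ and the preimage $f^{-1}(\{p^*\})$ is a singleton. If $f$ is null-homotopic relative to its endpoints (i.e. homotopic rel $\{0,1\}$ to the constant loop at $p_1$), then there exists a loop $f' \colon [0,1] \to X$ based at $p_1$ whose image is contained in $X \setminus \{p_0, p^*\}$, and a homotopy rel $\{0,1\}$ between $f$ and $f'$ whose image is contained in $X \setminus \{p_0\}$. -/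

import Mathlib

namespace EKR

/-- Edges of the grid: horizontal ones are `inl`, vertical ones are `inr`. -/
abbrev Edge := (ℕ × ℕ) ⊕ (ℕ × ℕ)

/-- The four edges of a face. -/
def edges (τ : ℕ × ℕ) : Set Edge :=
  {Sum.inl τ, Sum.inl (τ.1, τ.2 + 1), Sum.inr τ, Sum.inr (τ.1 + 1, τ.2)}

/-- A group valued cochain is flat on a face if the boundary holonomy is trivial. -/
def Flat {G : Type*} [Group G] (a : Edge → G) (τ : ℕ × ℕ) : Prop :=
  a (Sum.inl τ) * a (Sum.inr (τ.1 + 1, τ.2)) = a (Sum.inr τ) * a (Sum.inl (τ.1, τ.2 + 1))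

/-- Two faces sharing an edge. -/
def Adj (σ τ : ℕ × ℕ) : Prop :=
  (σ.1 = τ.1 ∧ (σ.2 = τ.2 + 1 ∨ τ.2 = σ.2 + 1)) ∨ (σ.2 = τ.2 ∧ (σ.1 = τ.1 + 1 ∨ τ.1 = σ.1 + 1))

/-- Sets of faces which can be built one at a time starting from the top side. -/
inductive Shell (N : ℕ) : Finset (ℕ × ℕ) → Prop
  | empty : Shell N ∅
  | insert (L : Finset (ℕ × ℕ)) (τ : ℕ × ℕ) : Shell N L → τ ∉ L → τ.1 < N → τ.2 < N →
      (τ.2 + 1 = N ∨ ∃ σ ∈ L, Adj σ τ) → Shell N (insert τ L)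

theorem fresh_edge {N : ℕ} {L : Finset (ℕ × ℕ)} {τ : ℕ × ℕ}
    (h : τ.2 + 1 = N ∨ ∃ σ ∈ L, Adj σ τ) :
    ∃ e ∈ edges τ, ∀ σ : ℕ × ℕ, σ.1 < N → σ.2 < N → e ∈ edges σ → σ = τ ∨ σ ∈ L := by
  obtain ⟨i, j⟩ := τ
  rcases h with h | ⟨⟨i', j'⟩, hσ, h⟩
  · refine ⟨Sum.inl (i, j + 1), by simp [edges], ?_⟩
    rintro ⟨a, b⟩ ha hb he
    simp [edges] at he h ha hb ⊢
    omega
  · simp only [Adj] at h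
    rcases h with ⟨rfl, rfl | rfl⟩ | ⟨rfl, rfl | rfl⟩
    · refine ⟨Sum.inl (i', j + 1), by simp [edges], ?_⟩
      rintro ⟨a, b⟩ ha hb he
      simp [edges] at he
      rcases he with ⟨rfl, rfl⟩ | ⟨rfl, rfl⟩ <;> simp [hσ]
    · refine ⟨Sum.inl (i', j' + 1), by simp [edges], ?_⟩
      rintro ⟨a, b⟩ ha hb he
      simp [edges] at he
      rcases he with ⟨rfl, rfl⟩ | ⟨rfl, rfl⟩ <;> simp [hσ]
    · refine ⟨Sum.inr (i + 1, j'), by simp [edges], ?_⟩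
      rintro ⟨a, b⟩ ha hb he
      simp [edges] at he
      rcases he with ⟨rfl, rfl⟩ | ⟨rfl, rfl⟩ <;> simp [hσ]
    · refine ⟨Sum.inr (i' + 1, j'), by simp [edges], ?_⟩
      rintro ⟨a, b⟩ ha hb he
      simp [edges] at he
      rcases he with ⟨rfl, rfl⟩ | ⟨rfl, rfl⟩ <;> simp [hσ]

theorem solve_edge {G : Type*} [Group G] (a : Edge → G) (τ : ℕ × ℕ) (e : Edge)
    (he : e ∈ edges τ) : ∃ x, Flat (Function.update a e x) τ := by
  obtain ⟨i, j⟩ := τ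
  simp only [edges, Set.mem_insert_iff, Set.mem_singleton_iff] at he
  rcases he with rfl | rfl | rfl | rfl
  · refine ⟨a (Sum.inr (i, j)) * a (Sum.inl (i, j + 1)) * (a (Sum.inr (i + 1, j)))⁻¹, ?_⟩
    simp [Flat, Function.update]
  · refine ⟨(a (Sum.inr (i, j)))⁻¹ * (a (Sum.inl (i, j)) * (a (Sum.inr (i + 1, j)))), ?_⟩
    simp [Flat, Function.update]
  · refine ⟨a (Sum.inl (i, j)) * a (Sum.inr (i + 1, j)) * (a (Sum.inl (i, j + 1)))⁻¹, ?_⟩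
    simp [Flat, Function.update]
  · refine ⟨(a (Sum.inl (i, j)))⁻¹ * (a (Sum.inr (i, j)) * (a (Sum.inl (i, j + 1)))), ?_⟩
    simp [Flat, Function.update]

theorem flat_congr {G : Type*} [Group G] {a b : Edge → G} {τ : ℕ × ℕ}
    (h : ∀ e ∈ edges τ, a e = b e) (ha : Flat a τ) : Flat b τ := by
  unfold Flat at *
  rw [← h _ (by simp [edges]), ← h _ (by simp [edges]), ← h _ (by simp [edges]),
    ← h _ (by simp [edges]), ha]

theorem extend_flat {G : Type*} [Group G] {N : ℕ} {L : Finset (ℕ × ℕ)} (hL : Shell N L) :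
    ∀ a : Edge → G, (∀ τ : ℕ × ℕ, τ.1 < N → τ.2 < N → τ ∉ L → Flat a τ) →
    ∃ a' : Edge → G, (∀ τ : ℕ × ℕ, τ.1 < N → τ.2 < N → Flat a' τ) ∧
      ∀ τ : ℕ × ℕ, τ.1 < N → τ.2 < N → τ ∉ L → ∀ e ∈ edges τ, a' e = a e := by
  induction hL with
  | empty => exact fun a ha => ⟨a, fun τ h1 h2 => ha τ h1 h2 (by simp), fun _ _ _ _ _ _ => rfl⟩
  | insert L τ hL hτ h1 h2 hadj ih =>
    intro a ha
    obtain ⟨e, he, hfresh⟩ := fresh_edge hadj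
    obtain ⟨x, hx⟩ := solve_edge a τ e he
    have key : ∀ σ : ℕ × ℕ, σ.1 < N → σ.2 < N → σ ∉ insert τ L → ∀ e' ∈ edges σ,
        Function.update a e x e' = a e' := by
      intro σ s1 s2 hσ e' he'
      rw [Function.update_of_ne]
      rintro rfl
      apply hσ
      simpa using hfresh σ s1 s2 he'
    obtain ⟨a', hf, heq⟩ := ih (Function.update a e x) (by
      intro σ s1 s2 hσ
      by_cases hστ : σ = τ
      · rw [hστ]; exact hx
      · have hσ' : σ ∉ insert τ L := by simp [hστ, hσ]
        exact flat_congr (fun e' he' => (key σ s1 s2 hσ' e' he').symm) (ha σ s1 s2 hσ'))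
    refine ⟨a', hf, fun σ s1 s2 hσ e' he' => ?_⟩
    rw [heq σ s1 s2 (fun h => hσ (by simp [h])) e' he', key σ s1 s2 hσ e' he']

theorem potential {G : Type*} [Group G] {N : ℕ} (a : Edge → G)
    (ha : ∀ τ : ℕ × ℕ, τ.1 < N → τ.2 < N → Flat a τ) :
    ∃ g : ℕ → ℕ → G,
      (∀ i j, i < N → j ≤ N → a (Sum.inl (i, j)) = (g i j)⁻¹ * g (i + 1) j) ∧
      (∀ i j, i ≤ N → j < N → a (Sum.inr (i, j)) = (g i j)⁻¹ * g i (j + 1)) := by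
  let p : ℕ → G := fun i => Nat.rec 1 (fun i x => x * a (Sum.inl (i, 0))) i
  let g : ℕ → ℕ → G := fun i j => Nat.rec (p i) (fun j x => x * a (Sum.inr (i, j))) j
  have hv : ∀ i j, g i (j + 1) = g i j * a (Sum.inr (i, j)) := fun i j => rfl
  have hp : ∀ i, g (i + 1) 0 = g i 0 * a (Sum.inl (i, 0)) := fun i => rfl
  have hh : ∀ i j, i < N → j ≤ N → g (i + 1) j = g i j * a (Sum.inl (i, j)) := by
    intro i j hi
    induction j with
    | zero => intro _; exact hp i
    | succ j ih =>
      intro hj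
      have := ha (i, j) hi (by simpa using hj)
      simp only [Flat] at this
      rw [hv i j, hv (i + 1) j, ih (by omega), mul_assoc, mul_assoc, this]
  refine ⟨g, fun i j hi hj => ?_, fun i j hi hj => ?_⟩
  · rw [hh i j hi hj]; group
  · rw [hv i j]; group

/-- The parity argument: a vertex set whose characteristic function only changes along
interior edges of the region cannot separate the two ends of the edge `k` on the bottom. -/
theorem separation {N : ℕ} (D : Set (ℕ × ℕ)) (S : Set (ℕ × ℕ)) (k : ℕ) (hk : k < N)
    (hkD : (k, 0) ∈ D)
    (hh : ∀ i j, (∃ τ ∈ D, Sum.inl (i, j) ∈ edges τ) →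
      ((∃ τ : ℕ × ℕ, τ ∉ D ∧ τ.1 < N ∧ τ.2 < N ∧ Sum.inl (i, j) ∈ edges τ) ∨
        (j = 0 ∧ i ≠ k) ∨ j = N) → ((i, j) ∈ S ↔ (i + 1, j) ∈ S))
    (hv : ∀ i j, (∃ τ ∈ D, Sum.inr (i, j) ∈ edges τ) →
      ((∃ τ : ℕ × ℕ, τ ∉ D ∧ τ.1 < N ∧ τ.2 < N ∧ Sum.inr (i, j) ∈ edges τ) ∨
        i = 0 ∨ i = N) → ((i, j) ∈ S ↔ (i, j + 1) ∈ S))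
    (h0 : (k, 0) ∈ S) : (k + 1, 0) ∈ S := by
  classical
  let χ : ℕ × ℕ → Multiplicative ℤ := fun v => if v ∈ S then Multiplicative.ofAdd 1 else 1
  have hχ : ∀ v w, (v ∈ S ↔ w ∈ S) → χ v = χ w := by
    intro v w h; simp only [χ]; simp [h]
  let b : Edge → Multiplicative ℤ := fun e => match e with
    | Sum.inl (i, j) => (χ (i, j))⁻¹ * χ (i + 1, j)
    | Sum.inr (i, j) => (χ (i, j))⁻¹ * χ (i, j + 1)
  let a : Edge → Multiplicative ℤ := fun e => if ∃ τ ∈ D, e ∈ edges τ then b e else 1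
  have hbflat : ∀ τ, Flat b τ := by
    rintro ⟨i, j⟩
    simp only [Flat, b]
    group
  have ha1 : ∀ i j, ((∃ τ : ℕ × ℕ, τ ∉ D ∧ τ.1 < N ∧ τ.2 < N ∧ Sum.inl (i, j) ∈ edges τ) ∨
        (j = 0 ∧ i ≠ k) ∨ j = N) → a (Sum.inl (i, j)) = 1 := by
    intro i j h
    simp only [a]
    split_ifs with hD
    · simp only [b]
      rw [hχ _ _ (hh i j hD h)]; simp
    · rfl
  have ha2 : ∀ i j, ((∃ τ : ℕ × ℕ, τ ∉ D ∧ τ.1 < N ∧ τ.2 < N ∧ Sum.inr (i, j) ∈ edges τ) ∨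
        i = 0 ∨ i = N) → a (Sum.inr (i, j)) = 1 := by
    intro i j h
    simp only [a]
    split_ifs with hD
    · simp only [b]
      rw [hχ _ _ (hv i j hD h)]; simp
    · rfl
  have haflat : ∀ τ : ℕ × ℕ, τ.1 < N → τ.2 < N → Flat a τ := by
    rintro ⟨i, j⟩ h1 h2
    by_cases hD : (i, j) ∈ D
    · refine flat_congr (a := b) ?_ (hbflat _)
      intro e he
      simp only [a]
      rw [if_pos ⟨_, hD, he⟩]
    · simp only [Flat]
      rw [ha1 _ _ (Or.inl ⟨_, hD, h1, h2, by simp [edges]⟩),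
        ha1 _ _ (Or.inl ⟨_, hD, h1, h2, by simp [edges]⟩),
        ha2 _ _ (Or.inl ⟨_, hD, h1, h2, by simp [edges]⟩),
        ha2 _ _ (Or.inl ⟨_, hD, h1, h2, by simp [edges]⟩)]
  obtain ⟨g, gh, gv⟩ := potential a haflat
  have st : ∀ x y : Multiplicative ℤ, 1 = x⁻¹ * y → y = x := fun x y h => by
    have := inv_mul_eq_one.mp h.symm
    exact this.symm
  have e1 : ∀ i, i ≤ k → g i 0 = g 0 0 := by
    intro i
    induction i with
    | zero => intro _; rfl
    | succ i ih =>
      intro hi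
      have := gh i 0 (by omega) (by omega)
      rw [ha1 i 0 (Or.inr (Or.inl ⟨rfl, by omega⟩))] at this
      rw [st _ _ this, ih (by omega)]
  have e2 : ∀ j, j ≤ N → g 0 j = g 0 0 := by
    intro j
    induction j with
    | zero => intro _; rfl
    | succ j ih =>
      intro hj
      have := gv 0 j (by omega) (by omega)
      rw [ha2 0 j (Or.inr (Or.inl rfl))] at this
      rw [st _ _ this, ih (by omega)]
  have e3 : ∀ i, i ≤ N → g i N = g 0 N := by
    intro i
    induction i with
    | zero => intro _; rfl
    | succ i ih =>
      intro hi
      have := gh i N (by omega) (by omega)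
      rw [ha1 i N (Or.inr (Or.inr rfl))] at this
      rw [st _ _ this, ih (by omega)]
  have e4 : ∀ j, j ≤ N → g N j = g N 0 := by
    intro j
    induction j with
    | zero => intro _; rfl
    | succ j ih =>
      intro hj
      have := gv N j (by omega) (by omega)
      rw [ha2 N j (Or.inr (Or.inr rfl))] at this
      rw [st _ _ this, ih (by omega)]
  have e5 : ∀ i, k + 1 + i ≤ N → g (k + 1 + i) 0 = g (k + 1) 0 := by
    intro i
    induction i with
    | zero => intro _; rfl
    | succ i ih =>
      intro hi
      have := gh (k + 1 + i) 0 (by omega) (by omega)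
      rw [ha1 (k + 1 + i) 0 (Or.inr (Or.inl ⟨rfl, by omega⟩))] at this
      rw [← add_assoc, st _ _ this, ih (by omega)]
  have e6 : g (k + 1) 0 = g N 0 := by
    obtain ⟨m, rfl⟩ := Nat.exists_eq_add_of_le (show k + 1 ≤ N by omega)
    exact (e5 m le_rfl).symm
  have hak : a (Sum.inl (k, 0)) = 1 := by
    rw [gh k 0 hk (by omega), e1 k le_rfl, e6, ← e4 N le_rfl, e3 N le_rfl, e2 N le_rfl]
    simp
  have hak' : a (Sum.inl (k, 0)) = (χ (k, 0))⁻¹ * χ (k + 1, 0) := by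
    simp only [a]
    rw [if_pos ⟨_, hkD, by simp [edges]⟩]
  rw [hak] at hak'
  have h := st _ _ hak'
  by_contra hn
  simp only [χ, if_pos h0, if_neg hn] at h
  have := congrArg Multiplicative.toAdd h
  simp at this

end EKR

namespace EKR

open Topology

local notation "I" => unitInterval

theorem Shell.lt {N : ℕ} {L : Finset (ℕ × ℕ)} (h : Shell N L) :
    ∀ τ ∈ L, τ.1 < N ∧ τ.2 < N := by
  induction h with
  | empty => simp
  | insert L τ hL hτ h1 h2 hadj ih =>
    intro σ hσ
    rcases Finset.mem_insert.mp hσ with rfl | h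
    · exact ⟨h1, h2⟩
    · exact ih σ h

theorem exists_shell (N : ℕ) (P : ℕ × ℕ → Prop) :
    ∃ L : Finset (ℕ × ℕ), Shell N L ∧ (∀ τ ∈ L, P τ) ∧
      ∀ τ : ℕ × ℕ, τ.1 < N → τ.2 < N → P τ → (τ.2 + 1 = N ∨ ∃ σ ∈ L, Adj σ τ) → τ ∈ L := by
  classical
  let 𝒮 := (Finset.powerset (Finset.range N ×ˢ Finset.range N)).filter
    (fun L => Shell N L ∧ ∀ τ ∈ L, P τ)
  have hne : 𝒮.Nonempty := ⟨∅, by simp [𝒮, Shell.empty]⟩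
  obtain ⟨L, hL, hmax⟩ := Finset.exists_max_image 𝒮 Finset.card hne
  simp only [𝒮, Finset.mem_filter, Finset.mem_powerset] at hL
  refine ⟨L, hL.2.1, hL.2.2, fun τ h1 h2 hP hadj => ?_⟩
  by_contra hτ
  have hS := Shell.insert L τ hL.2.1 hτ h1 h2 hadj
  have := hmax (insert τ L) (by
    simp only [𝒮, Finset.mem_filter, Finset.mem_powerset]
    refine ⟨fun σ hσ => ?_, hS, ?_⟩
    · simpa using hS.lt σ hσ
    · intro σ hσ
      rcases Finset.mem_insert.mp hσ with rfl | h
      · exact hP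
      · exact hL.2.2 σ h)
  rw [Finset.card_insert_of_notMem hτ] at this
  omega

/-- A closed face of the `N × N` grid in the unit square. -/
def face (N : ℕ) (τ : ℕ × ℕ) : Set (I × I) :=
  {q | ((τ.1 : ℝ) ≤ q.1 * N ∧ (q.1 : ℝ) * N ≤ τ.1 + 1) ∧
    ((τ.2 : ℝ) ≤ q.2 * N ∧ (q.2 : ℝ) * N ≤ τ.2 + 1)}

theorem preconn_strip (N : ℕ) (a b : ℝ) :
    IsPreconnected {x : I | a ≤ (x : ℝ) * N ∧ (x : ℝ) * N ≤ b} := by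
  apply Set.OrdConnected.isPreconnected
  constructor
  rintro x ⟨hx1, hx2⟩ y ⟨hy1, hy2⟩ z ⟨hz1, hz2⟩
  have h1 : (x : ℝ) ≤ z := hz1
  have h2 : (z : ℝ) ≤ y := hz2
  have hN : (0 : ℝ) ≤ N := Nat.cast_nonneg N
  exact ⟨by nlinarith, by nlinarith⟩

theorem face_preconn (N : ℕ) (τ : ℕ × ℕ) : IsPreconnected (face N τ) :=
  (preconn_strip N τ.1 (τ.1 + 1)).prod (preconn_strip N τ.2 (τ.2 + 1))

theorem exists_index {N : ℕ} (hN : 0 < N) (x : I) :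
    ∃ i : ℕ, i < N ∧ (i : ℝ) ≤ x * N ∧ (x : ℝ) * N ≤ i + 1 := by
  have hx0 := x.2.1
  have hx1 := x.2.2
  have hN' : (0 : ℝ) < N := by exact_mod_cast hN
  have h0 : 0 ≤ (x : ℝ) * N := by positivity
  by_cases h : (x : ℝ) * N < N
  · refine ⟨⌊(x : ℝ) * N⌋₊, ?_, Nat.floor_le h0, (Nat.lt_floor_add_one _).le⟩
    exact (Nat.floor_lt h0).2 h
  · have hx : (x : ℝ) * N = N := le_antisymm (by nlinarith) (not_lt.mp h)
    refine ⟨N - 1, by omega, ?_, ?_⟩ <;> rw [hx] <;> push_cast [Nat.cast_sub hN] <;> linarith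

theorem exists_face {N : ℕ} (hN : 0 < N) (q : I × I) :
    ∃ τ : ℕ × ℕ, τ.1 < N ∧ τ.2 < N ∧ q ∈ face N τ := by
  obtain ⟨i, hi, h1⟩ := exists_index hN q.1
  obtain ⟨j, hj, h2⟩ := exists_index hN q.2
  exact ⟨(i, j), hi, hj, h1, h2⟩

theorem exists_gridpt {N : ℕ} (hN : 0 < N) {i : ℕ} (hi : i ≤ N) : ∃ x : I, (x : ℝ) * N = i := by
  have hN' : (0 : ℝ) < N := by exact_mod_cast hN
  refine ⟨⟨(i : ℝ) / N, by positivity, ?_⟩, ?_⟩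
  · rw [div_le_one hN']; exact_mod_cast hi
  · simp only; field_simp

theorem face_adj {N : ℕ} {σ τ : ℕ × ℕ} (h1 : τ.1 < N) (h2 : τ.2 < N) (h3 : σ.1 < N)
    (h4 : σ.2 < N) (h : Adj σ τ) : (face N σ ∩ face N τ).Nonempty := by
  have hN : 0 < N := by omega
  obtain ⟨x, hx⟩ := exists_gridpt hN (i := max σ.1 τ.1) (by omega)
  obtain ⟨y, hy⟩ := exists_gridpt hN (i := max σ.2 τ.2) (by omega)
  refine ⟨(x, y), ?_, ?_⟩
  all_goals
    simp only [face, Set.mem_ofPred_eq, hx, hy]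
    unfold Adj at h
    norm_cast
    omega

theorem walk {P : ℕ → Prop} {a b : ℕ} (h : P a)
    (hs : ∀ n, min a b ≤ n → n + 1 ≤ max a b → (P n ↔ P (n + 1))) : P b := by
  rcases le_total a b with hab | hab
  · rw [min_eq_left hab, max_eq_right hab] at hs
    have : ∀ m, a + m ≤ b → P (a + m) := by
      intro m
      induction m with
      | zero => intro _; exact h
      | succ m ih => intro hm; exact (hs (a + m) (by omega) (by omega)).1 (ih (by omega))
    obtain ⟨m, rfl⟩ := Nat.exists_eq_add_of_le hab
    exact this m le_rfl
  · rw [min_eq_right hab, max_eq_left hab] at hs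
    obtain ⟨m, rfl⟩ := Nat.exists_eq_add_of_le hab
    have : ∀ k, k ≤ m → P (b + (m - k)) := by
      intro k
      induction k with
      | zero => intro _; exact h
      | succ k ih =>
        intro hk
        have := ih (by omega)
        rw [show b + (m - k) = b + (m - (k + 1)) + 1 by omega] at this
        exact (hs _ (by omega) (by omega)).2 this
    simpa using this m le_rfl

theorem strip_near {N i i' a : ℕ} {ε x y r z : ℝ} (hN : 1 < ε * N) (hN0 : 0 < N)
    (hr1 : (i : ℝ) ≤ r * N) (hr2 : r * N ≤ i + 1)
    (hy1 : (i' : ℝ) ≤ y * N) (hy2 : y * N ≤ i' + 1)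
    (ha1 : min i i' ≤ a) (ha2 : a ≤ max i i')
    (hz1 : (a : ℝ) ≤ z * N) (hz2 : z * N ≤ a + 1)
    (hrx : |r - x| < ε) (hyx : |y - x| < ε) : |z - x| < 2 * ε := by
  have hN' : (0 : ℝ) < N := by exact_mod_cast hN0
  rw [abs_lt] at *
  have hlow : r * N - 1 ≤ z * N ∨ y * N - 1 ≤ z * N := by
    rcases min_le_iff.mp ha1 with h | h
    · left
      have : (i : ℝ) ≤ a := by exact_mod_cast h
      linarith
    · right
      have : (i' : ℝ) ≤ a := by exact_mod_cast h
      linarith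
  have hup : z * N ≤ r * N + 1 ∨ z * N ≤ y * N + 1 := by
    rcases le_max_iff.mp ha2 with h | h
    · left
      have : (a : ℝ) ≤ i := by exact_mod_cast h
      linarith
    · right
      have : (a : ℝ) ≤ i' := by exact_mod_cast h
      linarith
  constructor
  · rcases hlow with h | h
    · have : (r - ε) * N < z * N := by nlinarith
      have := lt_of_mul_lt_mul_right this hN'.le
      linarith
    · have : (y - ε) * N < z * N := by nlinarith
      have := lt_of_mul_lt_mul_right this hN'.le
      linarith
  · rcases hup with h | h
    · have : z * N < (r + ε) * N := by nlinarith
      have := lt_of_mul_lt_mul_right this hN'.le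
      linarith
    · have : z * N < (y + ε) * N := by nlinarith
      have := lt_of_mul_lt_mul_right this hN'.le
      linarith

theorem dist_sq_lt {p q : I × I} {ε : ℝ} :
    dist p q < ε ↔ |(p.1 : ℝ) - q.1| < ε ∧ |(p.2 : ℝ) - q.2| < ε := by
  rw [Prod.dist_eq, max_lt_iff, Subtype.dist_eq, Subtype.dist_eq, Real.dist_eq, Real.dist_eq]

theorem fill (B : Set (I × I)) (hB : IsClosed B) (htop : ∀ s : I, (s, (1 : I)) ∉ B) :
    ∃ (L : ℕ → Finset (ℕ × ℕ)) (U : Set (I × I)), IsOpen U ∧ closure U ⊆ U ∪ B ∧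
      (∀ s : I, (s, (1 : I)) ∈ U) ∧
      (∀ N, 0 < N → Shell N (L N) ∧ ∀ τ ∈ L N, face N τ ⊆ U ∧ ∀ q ∈ face N τ, q ∉ B) ∧
      ∀ A : Set (I × I), IsCompact A → A ⊆ U → ∃ N₀ : ℕ, ∀ N ≥ N₀, ∀ τ : ℕ × ℕ,
        τ.1 < N → τ.2 < N → (face N τ ∩ A).Nonempty → τ ∈ L N := by
  choose L hshell hLB hclosed using fun N => exists_shell N (fun τ => ∀ q ∈ face N τ, q ∉ B)
  let U : Set (I × I) := {q | ∃ δ > 0, ∃ N₀ : ℕ, ∀ N ≥ N₀, ∀ τ : ℕ × ℕ, τ.1 < N → τ.2 < N →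
    (∃ r ∈ face N τ, dist r q < δ) → τ ∈ L N}
  have adj_iff : ∀ N (σ τ : ℕ × ℕ), σ.1 < N → σ.2 < N → τ.1 < N → τ.2 < N →
      (∀ q ∈ face N σ, q ∉ B) → (∀ q ∈ face N τ, q ∉ B) → Adj σ τ → (σ ∈ L N ↔ τ ∈ L N) := by
    intro N σ τ s1 s2 t1 t2 hσ hτ hadj
    refine ⟨fun h => hclosed N τ t1 t2 hτ (Or.inr ⟨σ, h, hadj⟩),
      fun h => hclosed N σ s1 s2 hσ (Or.inr ⟨τ, h, ?_⟩)⟩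
    unfold Adj at *
    omega
  -- a box of faces near a point off `B`
  have box : ∀ (q : I × I) (ε : ℝ), (∀ z, dist z q < 2 * ε → z ∉ B) → ∀ N : ℕ, 0 < N →
      1 < ε * N → ∀ σ τ : ℕ × ℕ, σ.1 < N → σ.2 < N → τ.1 < N → τ.2 < N →
      (∃ y ∈ face N σ, dist y q < ε) → (∃ r ∈ face N τ, dist r q < ε) →
      ((∀ z ∈ face N σ, z ∉ B) ∧ (σ ∈ L N → τ ∈ L N)) := by
    rintro q ε hq N hN0 hN ⟨i', j'⟩ ⟨i, j⟩ s1 s2 t1 t2 ⟨y, hy, hyq⟩ ⟨r, hr, hrq⟩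
    rw [dist_sq_lt] at hyq hrq
    have good : ∀ a b, min i i' ≤ a → a ≤ max i i' → min j j' ≤ b → b ≤ max j j' →
        ∀ z ∈ face N (a, b), z ∉ B := by
      intro a b ha1 ha2 hb1 hb2 z hz
      apply hq
      rw [dist_sq_lt]
      exact ⟨strip_near hN hN0 hr.1.1 hr.1.2 hy.1.1 hy.1.2 ha1 ha2 hz.1.1 hz.1.2 hrq.1 hyq.1,
        strip_near hN hN0 hr.2.1 hr.2.2 hy.2.1 hy.2.2 hb1 hb2 hz.2.1 hz.2.2 hrq.2 hyq.2⟩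
    simp only at s1 s2 t1 t2
    refine ⟨good i' j' (by omega) (by omega) (by omega) (by omega), fun hL => ?_⟩
    have h1 : (i, j') ∈ L N := by
      refine walk (P := fun n => (n, j') ∈ L N) hL ?_
      intro n hn1 hn2
      exact adj_iff N _ _ (by simp only; omega) (by simp only; omega) (by simp only; omega)
        (by simp only; omega)
        (good n j' (by omega) (by omega) (by omega) (by omega))
        (good (n + 1) j' (by omega) (by omega) (by omega) (by omega)) (by simp [Adj])
    refine walk (P := fun n => (i, n) ∈ L N) h1 ?_
    intro n hn1 hn2
    exact adj_iff N _ _ (by simp only; omega) (by simp only; omega) (by simp only; omega)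
        (by simp only; omega)
        (good i n (by omega) (by omega) (by omega) (by omega))
        (good i (n + 1) (by omega) (by omega) (by omega) (by omega)) (by simp [Adj])
  have room : ∀ q, q ∉ B → ∃ ε > 0, (∀ z, dist z q < 2 * ε → z ∉ B) ∧
      ∃ M : ℕ, 0 < M ∧ ∀ N ≥ M, 1 < ε * N := by
    intro q hq
    obtain ⟨d, hd, hdB⟩ := Metric.isOpen_iff.mp hB.isOpen_compl q hq
    refine ⟨d / 2, by positivity, fun z hz => hdB (by simpa [mul_div_cancel₀] using hz), ?_⟩
    obtain ⟨M, hM⟩ := exists_nat_gt (1 / (d / 2))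
    have hd2 : 0 < d / 2 := by positivity
    have hM0 : 0 < M := by
      have : (0 : ℝ) < M := lt_trans (by positivity) hM
      exact_mod_cast this
    refine ⟨M, hM0, fun N hN => ?_⟩
    have hNM : (M : ℝ) ≤ N := by exact_mod_cast hN
    have := lt_of_lt_of_le hM hNM
    rw [div_lt_iff₀ hd2] at this
    linarith
  have hUopen : IsOpen U := by
    rw [Metric.isOpen_iff]
    rintro q ⟨δ, hδ, N₀, h⟩
    refine ⟨δ / 2, by positivity, fun q' hq' => ⟨δ / 2, by positivity, N₀, ?_⟩⟩
    rintro N hN τ t1 t2 ⟨r, hr, hrq⟩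
    refine h N hN τ t1 t2 ⟨r, hr, ?_⟩
    have := dist_triangle r q' q
    rw [Metric.mem_ball] at hq'
    linarith
  have hUcl : closure U ⊆ U ∪ B := by
    intro q hq
    by_cases hqB : q ∈ B
    · exact Or.inr hqB
    left
    obtain ⟨ε, hε, hεB, M, hM0, hM⟩ := room q hqB
    obtain ⟨y, ⟨δ, hδ, N₀, hy⟩, hyq⟩ := Metric.mem_closure_iff.mp hq ε hε
    refine ⟨ε, hε, max M N₀, fun N hN τ t1 t2 hr => ?_⟩
    have hNM : M ≤ N := le_trans (le_max_left _ _) hN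
    obtain ⟨σ, s1, s2, hyσ⟩ := exists_face (show 0 < N by omega) y
    have hσ : σ ∈ L N := hy N (le_trans (le_max_right _ _) hN) σ s1 s2 ⟨y, hyσ, by simpa using hδ⟩
    exact (box q ε hεB N (by omega) (hM N hNM) σ τ s1 s2 t1 t2
      ⟨y, hyσ, by rw [dist_comm]; exact hyq⟩ hr).2 hσ
  have hUtop : ∀ s : I, (s, (1 : I)) ∈ U := by
    intro s
    obtain ⟨ε, hε, hεB, M, hM0, hM⟩ := room _ (htop s)
    refine ⟨ε, hε, M, fun N hN τ t1 t2 hr => ?_⟩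
    obtain ⟨i, hi, hi'⟩ := exists_index (show 0 < N by omega) s
    have hN1 : 0 < N := by omega
    have hmem : (s, (1 : I)) ∈ face N (i, N - 1) := by
      refine ⟨hi', ?_⟩
      simp only [Set.Icc.coe_one]
      push_cast [Nat.cast_sub hN1]
      constructor <;> linarith
    have hb := box _ ε hεB N hN1 (hM N hN) (i, N - 1) τ hi (by simp only; omega) t1 t2
      ⟨_, hmem, by simpa using hε⟩ hr
    exact hb.2 (hclosed N _ hi (by simp only; omega) hb.1 (Or.inl (by simp only; omega)))
  have hpre : ∀ T : Set (I × I), IsPreconnected T → (∀ q ∈ T, q ∉ B) → (T ∩ U).Nonempty →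
      T ⊆ U := by
    intro T hT hTB hne
    refine hT.subset_of_closure_inter_subset hUopen hne ?_
    rintro q ⟨hq, hqT⟩
    exact (hUcl hq).resolve_right (hTB q hqT)
  refine ⟨L, U, hUopen, hUcl, hUtop, fun N hN => ⟨hshell N, fun τ hτ => ⟨?_, hLB N τ hτ⟩⟩, ?_⟩
  · have key : ∀ L' : Finset (ℕ × ℕ), Shell N L' → (∀ τ ∈ L', ∀ q ∈ face N τ, q ∉ B) →
        ∀ τ ∈ L', face N τ ⊆ U := by
      intro L' hL'
      induction hL' with
      | empty => simp
      | insert L' τ hL' hτ h1 h2 hadj ih =>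
        intro hB' σ hσ
        have ih' := ih (fun τ hτ => hB' τ (Finset.mem_insert_of_mem hτ))
        rcases Finset.mem_insert.mp hσ with rfl | h
        · apply hpre _ (face_preconn _ _) (hB' _ hσ)
          rcases hadj with h | ⟨ρ, hρ, hadj⟩
          · obtain ⟨x, hx⟩ := exists_gridpt hN (i := σ.1) (by omega)
            refine ⟨(x, 1), ⟨?_, ?_⟩, hUtop x⟩
            · simp [hx]
            · rw [← h]; simp
          · obtain ⟨q, hq1, hq2⟩ := face_adj h1 h2 (hL'.lt ρ hρ).1 (hL'.lt ρ hρ).2 hadj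
            exact ⟨q, hq2, ih' ρ hρ hq1⟩
        · exact ih' σ h
    exact key (L N) (hshell N) (hLB N) τ hτ
  · intro A hA hAU
    have := hA.induction_on (p := fun S => ∃ N₀ : ℕ, ∀ N ≥ N₀, ∀ τ : ℕ × ℕ,
        τ.1 < N → τ.2 < N → (face N τ ∩ S).Nonempty → τ ∈ L N) ⟨0, by simp⟩
      (by
        rintro S T hST ⟨N₀, h⟩
        exact ⟨N₀, fun N hN τ t1 t2 hne => h N hN τ t1 t2 (hne.mono (by gcongr))⟩)
      (by
        rintro S T ⟨N₀, h⟩ ⟨N₁, h'⟩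
        refine ⟨max N₀ N₁, fun N hN τ t1 t2 hne => ?_⟩
        rw [Set.inter_union_distrib_left, Set.union_nonempty] at hne
        rcases hne with hne | hne
        · exact h N (le_trans (le_max_left _ _) hN) τ t1 t2 hne
        · exact h' N (le_trans (le_max_right _ _) hN) τ t1 t2 hne)
      (by
        intro q hq
        obtain ⟨δ, hδ, N₀, h⟩ := hAU hq
        refine ⟨Metric.ball q δ, mem_nhdsWithin_of_mem_nhds (Metric.ball_mem_nhds q hδ), N₀, ?_⟩
        rintro N hN τ t1 t2 ⟨r, hr, hrq⟩
        exact h N hN τ t1 t2 ⟨r, hr, hrq⟩)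
    exact this

end EKR

namespace EKR

open Topology CategoryTheory

universe u v

local notation "I" => unitInterval

theorem groupoid_to_group (C : Type u) [Groupoid.{v} C] (x : C) :
    ∃ (G : Type v) (_ : Group G) (Φ : ∀ y z : C, (y ⟶ z) → G),
      (∀ y z w (f : y ⟶ z) (g : z ⟶ w), Φ y w (f ≫ g) = Φ y z f * Φ z w g) ∧
      (∀ z (f g : x ⟶ z), Φ x z f = Φ x z g → f = g) := by
  classical
  refine ⟨(End x)ᵐᵒᵖ, inferInstance, fun y z f =>
    if h : Nonempty (x ⟶ y) then
      MulOpposite.op (h.some ≫ f ≫ Groupoid.inv (Nonempty.intro (h.some ≫ f)).some : x ⟶ x)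
    else 1, ?_, ?_⟩
  · intro y z w f g
    by_cases h : Nonempty (x ⟶ y)
    · have hz : Nonempty (x ⟶ z) := ⟨h.some ≫ f⟩
      simp only [dif_pos h, dif_pos hz]
      rw [← MulOpposite.op_mul, End.mul_def]
      simp
    · have hz : ¬ Nonempty (x ⟶ z) := fun ⟨k⟩ => h ⟨k ≫ Groupoid.inv f⟩
      simp only [dif_neg h, dif_neg hz, mul_one]
  · intro z f g h
    have hx : Nonempty (x ⟶ x) := ⟨𝟙 x⟩
    simp only [dif_pos hx] at h
    have h' := MulOpposite.op_injective h
    have e : ∀ k : x ⟶ z, k = Groupoid.inv hx.some ≫ (hx.some ≫ k ≫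
      Groupoid.inv (Nonempty.intro (hx.some ≫ f)).some) ≫
        (Nonempty.intro (hx.some ≫ f)).some := by
      intro k; simp
    rw [e f, e g]
    exact congrArg (fun t : x ⟶ x => Groupoid.inv hx.some ≫ t ≫
        (Nonempty.intro (hx.some ≫ f)).some) h'

/-- Lift a path avoiding `p₀` to the complement of `p₀`. -/
def liftPath {X : Type u} [TopologicalSpace X] {p₀ x y : X} (p : Path x y)
    (h : ∀ t, p t ≠ p₀) :
    Path (⟨x, by simpa using h 0⟩ : {z : X // z ≠ p₀}) ⟨y, by simpa using h 1⟩ where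
  toFun t := ⟨p t, h t⟩
  continuous_toFun := by fun_prop
  source' := by simp
  target' := by simp

instance : ContractibleSpace I :=
  (convex_Icc (0 : ℝ) 1).contractibleSpace ⟨0, by simp⟩

theorem exists_psi {X : Type u} [TopologicalSpace X] (p₀ x₀ : X) (hx₀ : x₀ ≠ p₀) :
    ∃ (G : Type u) (_ : Group G) (Ψ : ∀ (x y : X), Path x y → G),
      (∀ x y z (p : Path x y) (q : Path y z), (∀ t, p t ≠ p₀) → (∀ t, q t ≠ p₀) →
        Ψ x z (p.trans q) = Ψ x y p * Ψ y z q) ∧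
      (∀ x, x ≠ p₀ → Ψ x x (Path.refl x) = 1) ∧
      (∀ x y (p : Path x y), (∀ t, p t ≠ p₀) → Ψ y x p.symm = (Ψ x y p)⁻¹) ∧
      (∀ (F : I × I → X), Continuous F → (∀ q, F q ≠ p₀) → ∀ (x y z w : X) (b : Path x y)
        (r : Path y z) (l : Path x w) (t : Path w z), (∀ s, b s = F (s, 0)) →
        (∀ s, r s = F (1, s)) → (∀ s, l s = F (0, s)) → (∀ s, t s = F (s, 1)) →
        Ψ x y b * Ψ y z r = Ψ x w l * Ψ w z t) ∧
      (∀ y (p q : Path x₀ y), (∀ t, p t ≠ p₀) → (∀ t, q t ≠ p₀) → Ψ x₀ y p = Ψ x₀ y q →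
        ∃ F : I × I → X, Continuous F ∧ (∀ s, F (s, 0) = p s) ∧ (∀ s, F (s, 1) = q s) ∧
          (∀ t, F (0, t) = x₀) ∧ (∀ t, F (1, t) = y) ∧ ∀ z, F z ≠ p₀) := by
  classical
  obtain ⟨G, hG, Φ, hΦ, hinj⟩ := groupoid_to_group (FundamentalGroupoid {z : X // z ≠ p₀})
    (FundamentalGroupoid.mk ⟨x₀, hx₀⟩)
  let Φ' : ∀ {x y : {z : X // z ≠ p₀}}, Path x y → G := fun {x y} p =>
    Φ (FundamentalGroupoid.mk x) (FundamentalGroupoid.mk y) (Path.Homotopic.Quotient.mk p)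
  have hΦ' : ∀ {x y z : {w : X // w ≠ p₀}} (p : Path x y) (q : Path y z), Φ' (p.trans q) = Φ' p * Φ' q := by
    intro x y z p q
    exact hΦ (FundamentalGroupoid.mk x) (FundamentalGroupoid.mk y) (FundamentalGroupoid.mk z)
      (Path.Homotopic.Quotient.mk p) (Path.Homotopic.Quotient.mk q)
  have hom : ∀ {x y : {z : X // z ≠ p₀}} (p q : Path x y), p.Homotopic q → Φ' p = Φ' q := by
    intro x y p q h
    simp only [Φ']
    rw [Path.Homotopic.Quotient.eq.mpr h]
  have hrefl : ∀ x : {z : X // z ≠ p₀}, Φ' (Path.refl x) = 1 := by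
    intro x
    have := hΦ' (Path.refl x) (Path.refl x)
    rw [Path.refl_trans_refl] at this
    simpa using this
  have hsymm : ∀ {x y : {z : X // z ≠ p₀}} (p : Path x y), Φ' p.symm = (Φ' p)⁻¹ := by
    intro x y p
    rw [eq_inv_iff_mul_eq_one, ← hΦ', ← hrefl y]
    exact (hom _ _ ⟨Path.Homotopy.reflSymmTrans p⟩).symm
  let Ψ : ∀ (x y : X), Path x y → G := fun x y p =>
    if h : ∀ t, p t ≠ p₀ then Φ' (liftPath p h) else 1
  have hΨ : ∀ {x y} (p : Path x y) (h : ∀ t, p t ≠ p₀), Ψ x y p = Φ' (liftPath p h) :=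
    fun p h => dif_pos h
  refine ⟨G, hG, Ψ, ?_, ?_, ?_, ?_, ?_⟩
  · intro x y z p q hp hq
    have hpq : ∀ t, (p.trans q) t ≠ p₀ := by
      intro t
      rw [Path.trans_apply]
      split_ifs
      · exact hp _
      · exact hq _
    rw [hΨ _ hpq, hΨ p hp, hΨ q hq, ← hΦ']
    congr 1
    ext t
    simp only [liftPath, Path.coe_mk_mk, Path.trans_apply]
    split_ifs <;> rfl
  · intro x hx
    rw [hΨ (Path.refl x) (fun _ => hx)]
    exact hrefl ⟨x, hx⟩
  · intro x y p hp
    rw [hΨ p.symm (fun t => hp _), hΨ p hp, ← hsymm]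
    rfl
  · intro F hF hF0 x y z w b r l t hb hr hl ht
    obtain rfl : x = F (0, 0) := by rw [← hb, Path.source]
    obtain rfl : y = F (1, 0) := by rw [← hb, Path.target]
    obtain rfl : z = F (1, 1) := by rw [← hr, Path.target]
    obtain rfl : w = F (0, 1) := by rw [← hl, Path.target]
    have hb' : ∀ s, b s ≠ p₀ := fun s => by rw [hb]; exact hF0 _
    have hr' : ∀ s, r s ≠ p₀ := fun s => by rw [hr]; exact hF0 _
    have hl' : ∀ s, l s ≠ p₀ := fun s => by rw [hl]; exact hF0 _
    have ht' : ∀ s, t s ≠ p₀ := fun s => by rw [ht]; exact hF0 _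
    rw [hΨ b hb', hΨ r hr', hΨ l hl', hΨ t ht', ← hΦ', ← hΦ']
    apply hom
    let F' : C(I × I, {z : X // z ≠ p₀}) := ⟨fun q => ⟨F q, hF0 q⟩, by fun_prop⟩
    let pb : Path ((0, 0) : I × I) (1, 0) := ⟨⟨fun s => (s, 0), by fun_prop⟩, rfl, rfl⟩
    let pr : Path ((1, 0) : I × I) (1, 1) := ⟨⟨fun s => (1, s), by fun_prop⟩, rfl, rfl⟩
    let pl : Path ((0, 0) : I × I) (0, 1) := ⟨⟨fun s => (0, s), by fun_prop⟩, rfl, rfl⟩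
    let pt : Path ((0, 1) : I × I) (1, 1) := ⟨⟨fun s => (s, 1), by fun_prop⟩, rfl, rfl⟩
    have h := (SimplyConnectedSpace.paths_homotopic (pb.trans pr) (pl.trans pt)).map F'
    rw [Path.map_trans, Path.map_trans] at h
    have e1 : liftPath b hb' = pb.map F'.continuous := by
      ext s; exact hb s
    have e2 : liftPath r hr' = pr.map F'.continuous := by
      ext s; exact hr s
    have e3 : liftPath l hl' = pl.map F'.continuous := by
      ext s; exact hl s
    have e4 : liftPath t ht' = pt.map F'.continuous := by
      ext s; exact ht s
    rw [e1, e2, e3, e4]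
    exact h
  · intro y p q hp hq h
    rw [hΨ p hp, hΨ q hq] at h
    have h' := hinj _ _ _ h
    obtain ⟨K⟩ := Path.Homotopic.Quotient.eq.mp h'
    refine ⟨fun z => (K (z.2, z.1)).1, by fun_prop, ?_, ?_, ?_, ?_, fun z => (K (z.2, z.1)).2⟩
    · intro s
      exact congrArg Subtype.val (K.apply_zero s)
    · intro s
      exact congrArg Subtype.val (K.apply_one s)
    · intro t; simp
    · intro t; simp

end EKR

namespace EKR

open Topology

universe u

local notation "I" => unitInterval

/-- The point `x / N` of the unit interval (clamped). -/
noncomputable def gr (N : ℕ) (x : ℝ) : I := Set.projIcc (0 : ℝ) 1 zero_le_one (x / N)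

theorem continuous_gr (N : ℕ) : Continuous (gr N) := by
  unfold gr
  exact continuous_projIcc.comp (by fun_prop)

theorem gr_mul {N : ℕ} (hN : 0 < N) {x : ℝ} (h0 : 0 ≤ x) (h1 : x ≤ N) :
    (gr N x : ℝ) * N = x := by
  have hN' : (0 : ℝ) < N := by exact_mod_cast hN
  unfold gr
  rw [Set.projIcc_of_mem zero_le_one ⟨by positivity, by rwa [div_le_one hN']⟩]
  simp only
  field_simp

theorem gr_zero (N : ℕ) : gr N ((0 : ℕ) : ℝ) = 0 := by
  unfold gr
  simp

theorem gr_self {N : ℕ} (hN : 0 < N) : gr N (N : ℝ) = 1 := by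
  have hN' : (N : ℝ) ≠ 0 := by positivity
  unfold gr
  rw [div_self hN']
  simp

theorem gr_strip {N : ℕ} {i a : ℕ} (hN : i < N) (ha : a = i ∨ a = i + 1) :
    (i : ℝ) ≤ gr N a * N ∧ (gr N a : ℝ) * N ≤ i + 1 := by
  rw [gr_mul (by omega) (by positivity) (by norm_cast; omega)]
  constructor <;> norm_cast <;> omega

theorem gr_strip' {N : ℕ} {i : ℕ} (hN : i < N) (s : I) :
    (i : ℝ) ≤ gr N (i + s) * N ∧ (gr N (i + s) : ℝ) * N ≤ i + 1 := by
  have h0 := s.2.1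
  have h1 := s.2.2
  have hN' : (i : ℝ) + 1 ≤ N := by exact_mod_cast hN
  rw [gr_mul (by omega) (by positivity) (by linarith)]
  constructor <;> linarith

section
variable {X : Type u} [TopologicalSpace X]

/-- Horizontal edge path. -/
noncomputable def hE (Hp : I × I → X) (hc : Continuous Hp) (N i j : ℕ) :
    Path (Hp (gr N i, gr N j)) (Hp (gr N ((i + 1 : ℕ) : ℝ), gr N j)) where
  toFun s := Hp (gr N (i + s), gr N j)
  continuous_toFun := by
    have := continuous_gr N
    fun_prop
  source' := by simp
  target' := by simp

/-- Vertical edge path. -/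
noncomputable def vE (Hp : I × I → X) (hc : Continuous Hp) (N i j : ℕ) :
    Path (Hp (gr N i, gr N j)) (Hp (gr N i, gr N ((j + 1 : ℕ) : ℝ))) where
  toFun s := Hp (gr N i, gr N (j + s))
  continuous_toFun := by
    have := continuous_gr N
    fun_prop
  source' := by simp
  target' := by simp

theorem core (p₀ ps : X) (Hp : I × I → X) (hc : Continuous Hp) (N : ℕ)
    (L : Finset (ℕ × ℕ)) (hL : Shell N L)
    (hD : ∀ τ : ℕ × ℕ, τ.1 < N → τ.2 < N → τ ∉ L → ∀ q ∈ face N τ, Hp q ≠ p₀)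
    (hLs : ∀ τ ∈ L, ∀ q ∈ face N τ, Hp q ≠ ps)
    (k : ℕ) (hk : k < N) (hkL : (k, 0) ∉ L)
    (hl : ∀ t, Hp (0, t) ≠ ps) (hr : ∀ t, Hp (1, t) ≠ ps) (ht : ∀ s, Hp (s, 1) ≠ ps)
    (hb : ∀ s, Hp (s, 0) = ps → (k : ℝ) < s * N ∧ (s : ℝ) * N < k + 1) :
    ∃ F : I × I → X, Continuous F ∧ (∀ s : I, F (s, 0) = Hp (gr N (k + s), 0)) ∧
      (∀ s, F (s, 1) ≠ ps) ∧ (∀ t, F (0, t) = Hp (gr N k, 0)) ∧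
      (∀ t, F (1, t) = Hp (gr N (k + 1), 0)) ∧ ∀ z, F z ≠ p₀ := by
  have hN : 0 < N := by omega
  -- edges lie in faces
  have memh : ∀ (τ : ℕ × ℕ) (i j : ℕ), τ.1 < N → τ.2 < N → Sum.inl (i, j) ∈ edges τ →
      i < N ∧ j ≤ N ∧ ∀ s : I, (gr N (i + s), gr N j) ∈ face N τ := by
    rintro ⟨a, b⟩ i j h1 h2 he
    simp only [edges, Set.mem_insert_iff, Set.mem_singleton_iff, Sum.inl.injEq, Prod.mk.injEq,
      reduceCtorEq, or_false] at he
    simp only at h1 h2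
    have hia : i = a := by omega
    subst hia
    exact ⟨h1, by omega, fun s => ⟨gr_strip' h1 s, gr_strip h2 (by omega)⟩⟩
  have memv : ∀ (τ : ℕ × ℕ) (i j : ℕ), τ.1 < N → τ.2 < N → Sum.inr (i, j) ∈ edges τ →
      i ≤ N ∧ j < N ∧ ∀ s : I, (gr N i, gr N (j + s)) ∈ face N τ := by
    rintro ⟨a, b⟩ i j h1 h2 he
    simp only [edges, Set.mem_insert_iff, Set.mem_singleton_iff, Sum.inr.injEq, Prod.mk.injEq,
      reduceCtorEq, false_or] at he
    simp only at h1 h2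
    have hjb : j = b := by omega
    subst hjb
    exact ⟨by omega, h2, fun s => ⟨gr_strip h1 (by omega), gr_strip' h2 s⟩⟩
  have hx₀ : Hp (gr N k, gr N (0 : ℕ)) ≠ p₀ := by
    have := (memh (k, 0) k 0 hk hN (by simp [edges])).2.2 0
    simpa using hD _ hk hN hkL _ this
  obtain ⟨G, _, Ψ, htrans, hrefl, hsymm, hsq, hinj⟩ :=
    exists_psi p₀ (Hp (gr N k, gr N (0 : ℕ))) hx₀
  let a : Edge → G := fun e => match e with
    | Sum.inl (i, j) => Ψ _ _ (hE Hp hc N i j)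
    | Sum.inr (i, j) => Ψ _ _ (vE Hp hc N i j)
  have haflat : ∀ τ : ℕ × ℕ, τ.1 < N → τ.2 < N → τ ∉ L → Flat a τ := by
    rintro ⟨i, j⟩ h1 h2 hτ
    simp only at h1 h2
    simp only [Flat, a]
    refine hsq (fun q => Hp (gr N (i + q.1), gr N (j + q.2))) ?_ ?_ _ _ _ _ _ _ _ _ ?_ ?_ ?_ ?_
    · have := continuous_gr N
      fun_prop
    · intro q
      exact hD (i, j) h1 h2 hτ _ ⟨gr_strip' h1 q.1, gr_strip' h2 q.2⟩
    · intro s; simp [hE]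
    · intro s; simp [vE]
    · intro s; simp [vE]
    · intro s; simp [hE]
  obtain ⟨a', ha'flat, ha'eq⟩ := extend_flat hL a haflat
  obtain ⟨g, gh, gv⟩ := potential a' ha'flat
  let S : Set (ℕ × ℕ) := {v | ∃ p : Path (Hp (gr N k, gr N (0 : ℕ))) (Hp (gr N v.1, gr N v.2)),
    (∀ t, p t ≠ p₀) ∧ (∀ t, p t ≠ ps) ∧ Ψ _ _ p = (g k 0)⁻¹ * g v.1 v.2}
  have hS : ∀ (v w : ℕ × ℕ) (e : Path (Hp (gr N v.1, gr N v.2)) (Hp (gr N w.1, gr N w.2))),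
      (∀ t, e t ≠ p₀) → (∀ t, e t ≠ ps) → Ψ _ _ e = (g v.1 v.2)⁻¹ * g w.1 w.2 →
      v ∈ S → w ∈ S := by
    rintro v w e he1 he2 hΨ ⟨p, hp1, hp2, hp⟩
    refine ⟨p.trans e, ?_, ?_, ?_⟩
    · intro t
      rw [Path.trans_apply]
      split_ifs
      · exact hp1 _
      · exact he1 _
    · intro t
      rw [Path.trans_apply]
      split_ifs
      · exact hp2 _
      · exact he2 _
    · rw [htrans _ _ _ p e hp1 he1, hp, hΨ]; group
  have hSiff : ∀ (v w : ℕ × ℕ) (e : Path (Hp (gr N v.1, gr N v.2)) (Hp (gr N w.1, gr N w.2))),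
      (∀ t, e t ≠ p₀) → (∀ t, e t ≠ ps) → Ψ _ _ e = (g v.1 v.2)⁻¹ * g w.1 w.2 →
      (v ∈ S ↔ w ∈ S) := by
    intro v w e he1 he2 hΨ
    refine ⟨hS v w e he1 he2 hΨ, hS w v e.symm (fun t => he1 _) (fun t => he2 _) ?_⟩
    rw [hsymm _ _ e he1, hΨ]; group
  let D : Set (ℕ × ℕ) := {τ | τ.1 < N ∧ τ.2 < N ∧ τ ∉ L}
  have hkS : (k, 0) ∈ S := by
    refine ⟨Path.refl _, fun _ => hx₀, fun _ => ?_, ?_⟩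
    · intro h
      simp only [Path.refl_apply, gr_zero] at h
      have := (hb _ h).1
      rw [gr_mul hN (by positivity) (by exact_mod_cast hk.le)] at this
      exact lt_irrefl _ this
    · rw [hrefl _ hx₀]; simp
  have hend : (k + 1, 0) ∈ S := by
    refine separation (N := N) D S k hk ⟨hk, hN, hkL⟩ ?_ ?_ hkS
    · rintro i j ⟨τ, ⟨t1, t2, t3⟩, he⟩ hcase
      obtain ⟨hi, hj, hmem⟩ := memh τ i j t1 t2 he
      refine hSiff (i, j) (i + 1, j) (hE Hp hc N i j) ?_ ?_ ?_
      · intro s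
        exact hD τ t1 t2 t3 _ (hmem s)
      · intro s
        rcases hcase with ⟨ρ, hρ, r1, r2, hre⟩ | ⟨rfl, hik⟩ | rfl
        · have hρL : ρ ∈ L := by
            by_contra h
            exact hρ ⟨r1, r2, h⟩
          exact hLs ρ hρL _ ((memh ρ i j r1 r2 hre).2.2 s)
        · intro h
          have h' : Hp (gr N (i + s), 0) = ps := by
            rw [← gr_zero N]; exact h
          have h2 := hb _ h'
          have hs0 := s.2.1
          have hs1 := s.2.2
          have hN' : (i : ℝ) + 1 ≤ N := by exact_mod_cast hi
          rw [gr_mul hN (by positivity) (by linarith)] at h2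
          rcases lt_or_gt_of_ne hik with h3 | h3
          · have : (i : ℝ) + 1 ≤ k := by exact_mod_cast h3
            linarith
          · have : (k : ℝ) + 1 ≤ i := by exact_mod_cast h3
            linarith
        · have := ht (gr j (i + s))
          rw [← gr_self hN] at this
          exact this
      · rw [← gh i j hi hj, ha'eq τ t1 t2 t3 _ he]
    · rintro i j ⟨τ, ⟨t1, t2, t3⟩, he⟩ hcase
      obtain ⟨hi, hj, hmem⟩ := memv τ i j t1 t2 he
      refine hSiff (i, j) (i, j + 1) (vE Hp hc N i j) ?_ ?_ ?_
      · intro s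
        exact hD τ t1 t2 t3 _ (hmem s)
      · intro s
        rcases hcase with ⟨ρ, hρ, r1, r2, hre⟩ | rfl | rfl
        · have hρL : ρ ∈ L := by
            by_contra h
            exact hρ ⟨r1, r2, h⟩
          exact hLs ρ hρL _ ((memv ρ i j r1 r2 hre).2.2 s)
        · have := hl (gr N (j + s))
          rw [← gr_zero N] at this
          exact this
        · have := hr (gr i (j + s))
          rw [← gr_self hN] at this
          exact this
      · rw [← gv i j hi hj, ha'eq τ t1 t2 t3 _ he]
  obtain ⟨γ, hγ1, hγ2, hγ⟩ := hend
  have hek : Sum.inl (k, 0) ∈ edges (k, 0) := by simp [edges]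
  obtain ⟨F, hF, hF0, hF1, hFl, hFr, hFp⟩ := hinj _ (hE Hp hc N k 0) γ
    (fun s => hD (k, 0) hk hN hkL _ ((memh (k, 0) k 0 hk hN hek).2.2 s)) hγ1 (by
      rw [hγ]
      simp only
      rw [← gh k 0 hk hN.le, ha'eq (k, 0) hk hN hkL _ hek])
  refine ⟨F, hF, ?_, ?_, ?_, ?_, hFp⟩
  · intro s; rw [hF0, ← gr_zero N]; rfl
  · intro s; rw [hF1]; exact hγ2 s
  · intro t; rw [hFl, gr_zero]
  · intro t; rw [hFr, gr_zero]; push_cast; rfl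

end

theorem main {X : Type u} [TopologicalSpace X] [T2Space X]
    (p₀ p₁ pstar : X) (h01 : p₀ ≠ p₁) (h0s : p₀ ≠ pstar) (h1s : p₁ ≠ pstar)
    (f : unitInterval → X) (hf : Continuous f)
    (hf0 : f 0 = p₁) (hf1 : f 1 = p₁)
    (hp₀ : p₀ ∉ Set.range f)
    (s₀ : unitInterval) (hsingle : f ⁻¹' {pstar} = {s₀})
    (F : unitInterval × unitInterval → X) (hF : Continuous F)
    (Fb : ∀ s, F (s, 0) = f s) (Ft : ∀ s, F (s, 1) = p₁)
    (Fl : ∀ t, F (0, t) = p₁) (Fr : ∀ t, F (1, t) = p₁) :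
    ∃ (f' : unitInterval → X) (H : unitInterval × unitInterval → X),
      Continuous f' ∧ f' 0 = p₁ ∧ f' 1 = p₁ ∧
      Set.range f' ⊆ {p₀, pstar}ᶜ ∧
      Continuous H ∧ (∀ s, H (s, 0) = f s) ∧ (∀ s, H (s, 1) = f' s) ∧
      (∀ t, H (0, t) = p₁) ∧ (∀ t, H (1, t) = p₁) ∧
      Set.range H ⊆ {p₀}ᶜ := by
  classical
  have hfs : ∀ s, f s = pstar ↔ s = s₀ := by
    intro s
    have : s ∈ f ⁻¹' {pstar} ↔ s ∈ ({s₀} : Set I) := by rw [hsingle]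
    simpa using this
  have hf0' : ∀ s, f s ≠ p₀ := fun s h => hp₀ ⟨s, h⟩
  have hs0 : (0 : ℝ) < s₀ := by
    rcases eq_or_lt_of_le s₀.2.1 with h | h
    · exfalso
      have : s₀ = 0 := Subtype.ext h.symm
      exact h1s (by rw [← hf0, (hfs 0).2 this.symm])
    · exact h
  have hs1 : (s₀ : ℝ) < 1 := by
    rcases eq_or_lt_of_le s₀.2.2 with h | h
    · exfalso
      have : s₀ = 1 := Subtype.ext h
      exact h1s (by rw [← hf1, (hfs 1).2 this.symm])
    · exact h
  let B : Set (I × I) := F ⁻¹' {pstar}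
  have hB : IsClosed B := isClosed_singleton.preimage hF
  have hBmem : ∀ q, q ∈ B ↔ F q = pstar := fun q => Iff.rfl
  obtain ⟨L, U, hUo, hUcl, hUtop, hLN, hcomp⟩ := fill B hB (by
    intro s h
    rw [hBmem, Ft] at h
    exact h1s h)
  have hpre : ∀ T : Set (I × I), IsPreconnected T → (∀ q ∈ T, q ∉ B) → (T ∩ U).Nonempty →
      T ⊆ U := by
    intro T hT hTB hne
    refine hT.subset_of_closure_inter_subset hUo hne ?_
    rintro q ⟨hq, hqT⟩
    exact (hUcl hq).resolve_right (hTB q hqT)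
  have hUl : ∀ t : I, ((0 : I), t) ∈ U := by
    intro t
    refine hpre ({0} ×ˢ Set.univ) (isPreconnected_singleton.prod isPreconnected_univ) ?_
      ⟨(0, 1), by simp, hUtop 0⟩ (by simp)
    rintro ⟨x, y⟩ ⟨hx, -⟩ h
    obtain rfl : x = 0 := hx
    rw [hBmem, Fl] at h
    exact h1s h
  have hUr : ∀ t : I, ((1 : I), t) ∈ U := by
    intro t
    refine hpre ({1} ×ˢ Set.univ) (isPreconnected_singleton.prod isPreconnected_univ) ?_
      ⟨(1, 1), by simp, hUtop 1⟩ (by simp)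
    rintro ⟨x, y⟩ ⟨hx, -⟩ h
    obtain rfl : x = 1 := hx
    rw [hBmem, Fr] at h
    exact h1s h
  have hUb : ∀ s : I, s ≠ s₀ → (s, (0 : I)) ∈ U := by
    intro s hs
    rcases lt_or_gt_of_ne hs with h | h
    · refine hpre (Set.Iio s₀ ×ˢ {0}) (Set.ordConnected_Iio.isPreconnected.prod
        isPreconnected_singleton) ?_ ⟨(0, 0), ⟨hs0, rfl⟩, hUl 0⟩ ⟨h, rfl⟩
      rintro ⟨x, y⟩ ⟨hx, hy⟩ h
      obtain rfl : y = 0 := hy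
      rw [hBmem, Fb, hfs] at h
      exact ne_of_lt hx h
    · refine hpre (Set.Ioi s₀ ×ˢ {0}) (Set.ordConnected_Ioi.isPreconnected.prod
        isPreconnected_singleton) ?_ ⟨(1, 0), ⟨hs1, rfl⟩, hUr 0⟩ ⟨h, rfl⟩
      rintro ⟨x, y⟩ ⟨hx, hy⟩ h
      obtain rfl : y = 0 := hy
      rw [hBmem, Fb, hfs] at h
      exact ne_of_gt hx h
  -- the filled-in homotopy
  let Hp : I × I → X := fun q => if q ∈ U then F q else pstar
  have hHpU : ∀ q ∈ U, Hp q = F q := fun q hq => if_pos hq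
  have hHpc : Continuous Hp := by
    refine Continuous.if ?_ hF continuous_const
    intro q hq
    have hq' : q ∈ frontier U := hq
    rw [hUo.frontier_eq] at hq'
    exact (hUcl hq'.1).resolve_left hq'.2
  have hHb : ∀ s, Hp (s, 0) = f s := by
    intro s
    by_cases h : s = s₀
    · simp only [Hp]
      split_ifs
      · exact Fb s
      · exact ((hfs s).2 h).symm
    · rw [hHpU _ (hUb s h), Fb]
  let A : Set (I × I) := Hp ⁻¹' {p₀}
  have hA : IsCompact A := (isClosed_singleton.preimage hHpc).isCompact
  have hAU : A ⊆ U := by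
    intro q hq
    by_contra h
    have : Hp q = p₀ := hq
    simp only [Hp, if_neg h] at this
    exact h0s this.symm
  obtain ⟨N₀, hN₀⟩ := hcomp A hA hAU
  -- choose `N` such that `s₀ * N` is not an integer
  obtain ⟨N, hNN, hNpos, hNint⟩ : ∃ N : ℕ, N₀ ≤ N ∧ 0 < N ∧
      ∀ m : ℕ, (s₀ : ℝ) * N ≠ m := by
    by_contra hcon
    push Not at hcon
    obtain ⟨m, hm⟩ := hcon (N₀ + 1) (by omega) (by omega)
    obtain ⟨m', hm'⟩ := hcon (N₀ + 2) (by omega) (by omega)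
    push_cast at hm hm'
    have e : (s₀ : ℝ) = m' - m := by linarith
    have l1 : (m : ℝ) < m' := by linarith
    have l2 : (m' : ℝ) < m + 1 := by linarith
    norm_cast at l1 l2
    omega
  have hN' : (0 : ℝ) < N := by exact_mod_cast hNpos
  obtain ⟨k, hkN, hk1, hk2⟩ := exists_index hNpos s₀
  have hk1 : (k : ℝ) < s₀ * N := lt_of_le_of_ne hk1 (fun h => hNint k h.symm)
  have hk2 : (s₀ : ℝ) * N < k + 1 := lt_of_le_of_ne hk2 (fun h => hNint (k + 1) (by simpa using h))
  have hkN' : (k : ℝ) + 1 ≤ N := by exact_mod_cast hkN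
  obtain ⟨K, hK, K0, K1, Kl, Kr, Kp⟩ := core p₀ pstar Hp hHpc N (L N) (hLN N hNpos).1
    (by
      intro τ t1 t2 hτ q hq h
      exact hτ (hN₀ N hNN τ t1 t2 ⟨q, hq, h⟩))
    (by
      intro τ hτ q hq
      have := (hLN N hNpos).2 τ hτ
      rw [hHpU q (this.1 hq)]
      exact this.2 q hq)
    k hkN
    (by
      intro h
      refine ((hLN N hNpos).2 _ h).2 (s₀, 0) ⟨⟨hk1.le, hk2.le⟩, by simp⟩ ?_
      rw [hBmem, Fb]
      exact (hfs s₀).2 rfl)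
    (by intro t; rw [hHpU _ (hUl t), Fl]; exact h1s)
    (by intro t; rw [hHpU _ (hUr t), Fr]; exact h1s)
    (by intro t; rw [hHpU _ (hUtop t), Ft]; exact h1s)
    (by
      intro s hs
      rw [hHb, hfs] at hs
      rw [hs]
      exact ⟨hk1, hk2⟩)
  -- glue
  let c : I → I := fun s => Set.projIcc (0 : ℝ) 1 zero_le_one (s * N - k)
  have hcc : Continuous c := continuous_projIcc.comp (by fun_prop)
  have c0 : ∀ s : I, (s : ℝ) * N = k → c s = 0 := by
    intro s hs
    simp only [c]
    rw [hs, sub_self]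
    simp
  have c1 : ∀ s : I, (s : ℝ) * N = k + 1 → c s = 1 := by
    intro s hs
    simp only [c]
    rw [hs, add_sub_cancel_left]
    simp
  have grs : ∀ (s : I) (x : ℝ), (s : ℝ) * N = x → gr N x = s := by
    intro s x h
    unfold gr
    rw [← h, mul_div_cancel_right₀ _ hN'.ne']
    simp
  let H : I × I → X := fun q =>
    if (q.1 : ℝ) * N ≤ k then f q.1 else if (q.1 : ℝ) * N ≤ k + 1 then K (c q.1, q.2) else f q.1
  have hHc : Continuous H := by
    refine Continuous.if_le (by fun_prop) ?_ (by fun_prop) continuous_const ?_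
    · refine Continuous.if_le (by fun_prop) (by fun_prop) (by fun_prop) continuous_const ?_
      intro q hq
      rw [c1 _ hq, Kr, hHb, grs _ _ hq]
    · intro q hq
      rw [if_pos (by linarith), c0 _ hq, Kl, hHb, grs _ _ hq]
  have hHp : ∀ q, H q ≠ p₀ := by
    intro q
    simp only [H]
    split_ifs
    · exact hf0' _
    · exact Kp _
    · exact hf0' _
  refine ⟨fun s => H (s, 1), H, by fun_prop, ?_, ?_, ?_, hHc, ?_, fun _ => rfl, ?_, ?_, ?_⟩
  · simp [H, hf0]
  · simp only [H, Set.Icc.coe_one, one_mul]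
    rw [if_neg (by linarith)]
    split_ifs with h
    · rw [c1 1 (by rw [Set.Icc.coe_one]; linarith), Kr, hHb, grs 1 _ (by
        rw [Set.Icc.coe_one]; linarith), hf1]
    · exact hf1
  · rintro _ ⟨s, rfl⟩
    simp only [Set.mem_compl_iff, Set.mem_insert_iff, Set.mem_singleton_iff, not_or]
    refine ⟨hHp _, ?_⟩
    simp only [H]
    split_ifs with h1 h2
    · intro h
      rw [hfs] at h
      rw [h] at h1
      linarith
    · exact K1 _
    · intro h
      rw [hfs] at h
      rw [h] at h2
      linarith
  · intro s
    simp only [H]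
    split_ifs with h1 h2
    · rfl
    · rw [K0, hHb]
      congr 1
      apply grs
      simp only [c]
      rw [Set.projIcc_of_mem zero_le_one ⟨by linarith, by linarith⟩]
      simp
    · rfl
  · intro t
    simp [H, hf0]
  · intro t
    simp only [H, Set.Icc.coe_one, one_mul]
    rw [if_neg (by linarith)]
    split_ifs with h
    · rw [c1 1 (by rw [Set.Icc.coe_one]; linarith), Kr, hHb, grs 1 _ (by
        rw [Set.Icc.coe_one]; linarith), hf1]
    · exact hf1
  · rintro _ ⟨q, rfl⟩
    exact hHp q

end EKR


/-- Lemma (Eda–Karimov–Repovš, correction of Lemma 3.2): if a loop `f` at `p₁` in a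
Hausdorff space misses `p₀`, hits `p*` exactly once, and is null-homotopic rel
endpoints, then there is a loop `f'` at `p₁` avoiding both `p₀` and `p*` which is
homotopic to `f` rel endpoints within `X \ {p₀}`. -/
theorem stmt_0 {X : Type*} [TopologicalSpace X] [T2Space X]
    (p₀ p₁ pstar : X) (h01 : p₀ ≠ p₁) (h0s : p₀ ≠ pstar) (h1s : p₁ ≠ pstar)
    (f : unitInterval → X) (hf : Continuous f)
    (hf0 : f 0 = p₁) (hf1 : f 1 = p₁)
    (hp₀ : p₀ ∉ Set.range f)
    (hsingle : ∃ s₀ : unitInterval, f ⁻¹' {pstar} = {s₀})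
    (hnull : ∃ F : unitInterval × unitInterval → X, Continuous F ∧
      (∀ s, F (s, 0) = f s) ∧ (∀ s, F (s, 1) = p₁) ∧
      (∀ t, F (0, t) = p₁) ∧ (∀ t, F (1, t) = p₁)) :
    ∃ (f' : unitInterval → X) (H : unitInterval × unitInterval → X),
      Continuous f' ∧ f' 0 = p₁ ∧ f' 1 = p₁ ∧
      Set.range f' ⊆ {p₀, pstar}ᶜ ∧
      Continuous H ∧ (∀ s, H (s, 0) = f s) ∧ (∀ s, H (s, 1) = f' s) ∧
      (∀ t, H (0, t) = p₁) ∧ (∀ t, H (1, t) = p₁) ∧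
      Set.range H ⊆ {p₀}ᶜ := by
  obtain ⟨s₀, hs⟩ := hsingle
  obtain ⟨F, hF, h1, h2, h3, h4⟩ := hnull
  exact EKR.main p₀ p₁ pstar h01 h0s h1s f hf hf0 hf1 hp₀ s₀ hs F hF h1 h2 h3 h4
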